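/- (Nash's theorem, as a corollary of the main theorem applied to the Nash incentive.) Every finite game has a Nash equilibrium: there exists x̂ ∈ Δ such that u_i(x̂) = max_{α ∈ S_i} u_i(e_{iα}, x̂_{-i}) for every player i. -/

import Mathlib

open Finset

/-- Mixed strategy profile space `Δ`: player `i` has `s i + 1` pure strategies
(so every player has at least one strategy). -/
def Δset {n : ℕ} (s : Fin n → ℕ) : Set (∀ i, Fin (s i + 1) → ℝ) :=
  {x | (∀ i α, 0 ≤ x i α) ∧ ∀ i, ∑ α, x i α = 1}

/-- The `α`-th standard unit vector of `ℝ^{m+1}` (pure strategy `α`). -/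
def pureVec {m : ℕ} (α : Fin (m + 1)) : Fin (m + 1) → ℝ :=
  fun β => if β = α then 1 else 0

/-- Multilinear extension of a payoff function defined on pure profiles. -/
noncomputable def mulExt {n : ℕ} {s : Fin n → ℕ} (u : (∀ j, Fin (s j + 1)) → ℝ)
    (x : ∀ i, Fin (s i + 1) → ℝ) : ℝ :=
  ∑ p : ∀ j, Fin (s j + 1), (∏ j, x j (p j)) * u p

/-- The updating map `T(x)_i = (x_i + Σ_α φ_{iα}(x) e_{iα}) / (1 + Σ_β φ_{iβ}(x))`. -/
noncomputable def Tmap {n : ℕ} {s : Fin n → ℕ}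
    (φ : (∀ i, Fin (s i + 1) → ℝ) → ∀ i, Fin (s i + 1) → ℝ)
    (x : ∀ i, Fin (s i + 1) → ℝ) : ∀ i, Fin (s i + 1) → ℝ :=
  fun i α => (x i α + φ x i α) / (1 + ∑ β, φ x i β)

/-- `φ` is an incentive function. -/
def IsInc {n : ℕ} {s : Fin n → ℕ}
    (φ : (∀ i, Fin (s i + 1) → ℝ) → ∀ i, Fin (s i + 1) → ℝ) : Prop :=
  (∀ x i α, x i α = 0 → 0 ≤ φ x i α) ∧ ∀ x i, (∑ β, φ x i β) ≠ -1

/-- `x` is an incentive equilibrium for `φ`. -/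
def IncEq {n : ℕ} {s : Fin n → ℕ}
    (φ : (∀ i, Fin (s i + 1) → ℝ) → ∀ i, Fin (s i + 1) → ℝ)
    (x : ∀ i, Fin (s i + 1) → ℝ) : Prop :=
  ∀ i α, φ x i α = x i α * ∑ β, φ x i β

/-- `x` is a Nash equilibrium: each player's payoff is the maximum over pure deviations. -/
def NashEq {n : ℕ} {s : Fin n → ℕ} (u : Fin n → (∀ j, Fin (s j + 1)) → ℝ)
    (x : ∀ i, Fin (s i + 1) → ℝ) : Prop :=
  ∀ i, mulExt (u i) x =
    Finset.univ.sup' Finset.univ_nonempty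
      (fun α => mulExt (u i) (Function.update x i (pureVec α)))

/-!
An incentive equilibrium is a fixed point of the updating map, so Brouwer's theorem for a product
of simplices gives one for the Nash incentive, the positive part of the gain from a pure deviation.
The gains of a player average to zero against the mixed strategy played. At an incentive
equilibrium the incentives are proportional to that strategy, so the products
`incentive * gain = (gain⁺)²` sum to zero, and no deviation is profitable.

Brouwer's theorem is reached combinatorially, following Petri and Voorneveld. Rank the points of a
finite coloured net in the simplex by each coordinate. Scarf's lemma, a parity argument in which
dominant sets play the role of the cells of a triangulation, yields a set `S` of points such that
every point of the net is beaten by all of `S` in the ranking of some colour occurring in `S`. Such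
a set is small and close to the face spanned by its colours, so refining the net proves a form of
the Knaster–Kuratowski–Mazurkiewicz lemma. The fixed point property of the simplex follows from it,
and passes to a product of simplices because this is a retract of a simplex.
-/

section Counting

variable {α β : Type*} {s : Finset α}

theorem even_card_bipartiteAbove_of_forall_ne {r : α → β → Prop} [∀ a b, Decidable (r a b)]
    {t : Finset β} {a₀ : α} (ha₀ : a₀ ∈ s)
    (habove : ∀ a ∈ s, a ≠ a₀ → Even #(t.bipartiteAbove r a))
    (hbelow : ∀ b ∈ t, Even #(s.bipartiteBelow r b)) : Even #(t.bipartiteAbove r a₀) := by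
  classical
  have hsum : Even (∑ a ∈ s, #(t.bipartiteAbove r a)) := by
    rw [sum_card_bipartiteAbove_eq_sum_card_bipartiteBelow]
    exact even_sum _ hbelow
  rw [← add_sum_erase s _ ha₀, Nat.even_add] at hsum
  exact hsum.mpr (even_sum _ fun a ha ↦ habove a (mem_of_mem_erase ha) (ne_of_mem_erase ha))

variable [DecidableEq α] [DecidableEq β] {f : α → β}

theorem image_erase_eq_image_iff {a : α} (ha : a ∈ s) :
    (s.erase a).image f = s.image f ↔ ∃ b ∈ s, b ≠ a ∧ f b = f a := by
  constructor
  · intro h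
    obtain ⟨b, hb, hab⟩ := mem_image.mp (h ▸ mem_image_of_mem f ha)
    exact ⟨b, mem_of_mem_erase hb, ne_of_mem_erase hb, hab⟩
  · rintro ⟨b, hb, hne, hab⟩
    conv_rhs => rw [← insert_erase ha, image_insert]
    exact (insert_eq_of_mem (hab ▸ mem_image_of_mem f (mem_erase.mpr ⟨hne, hb⟩))).symm

theorem card_filter_collision_eq_two (h : #(s.image f) + 1 = #s) :
    #{a ∈ s | ∃ b ∈ s, b ≠ a ∧ f b = f a} = 2 := by
  obtain ⟨a, ha, b, hb, hab, hfab⟩ :=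
    exists_ne_map_eq_of_card_lt_of_maps_to (t := s.image f) (by lia)
      fun a ha ↦ mem_image_of_mem f ha
  have hinj : Set.InjOn f (s.erase a) := by
    apply injOn_of_card_image_eq
    rw [(image_erase_eq_image_iff ha).mpr ⟨b, hb, hab.symm, hfab.symm⟩, card_erase_of_mem ha]
    lia
  rw [card_eq_two]
  refine ⟨a, b, hab, ext fun x ↦ ?_⟩
  simp only [mem_filter, mem_insert, mem_singleton]
  constructor
  · rintro ⟨hx, y, hy, hyx, hfyx⟩
    by_contra! ⟨hxa, hxb⟩
    have hx' : x ∈ s.erase a := mem_erase.mpr ⟨hxa, hx⟩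
    obtain rfl | hya := eq_or_ne y a
    · exact hxb (hinj hx' (mem_erase.mpr ⟨hab.symm, hb⟩) (hfyx.symm.trans hfab))
    · exact hyx (hinj (mem_erase.mpr ⟨hya, hy⟩) hx' hfyx)
  · rintro (rfl | rfl)
    · exact ⟨ha, b, hb, hab.symm, hfab.symm⟩
    · exact ⟨hb, a, ha, hab, hfab⟩

theorem even_card_filter_image_erase_eq [Fintype β] (h : #s = Fintype.card β)
    (hne : s.image f ≠ univ) (b : β) : Even #{a ∈ s | (s.erase a).image f = univ.erase b} := by
  by_cases himage : s.image f = univ.erase b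
  · have hcard : #(s.image f) + 1 = #s := by
      rw [himage, card_erase_add_one (mem_univ b), card_univ, h]
    rw [← himage, filter_congr fun a ha ↦ image_erase_eq_image_iff ha,
      card_filter_collision_eq_two hcard]
    exact even_two
  · suffices ∀ a ∈ s, (s.erase a).image f ≠ univ.erase b by simp [filter_false_of_mem this]
    intro a ha herase
    have hinsert : s.image f = insert (f a) (univ.erase b) := by
      rw [← herase, ← image_insert, insert_erase ha]
    obtain hab | hab := eq_or_ne (f a) b
    · exact hne (by rw [hinsert, hab, insert_erase (mem_univ b)])
    · exact himage (by rw [hinsert, insert_eq_of_mem (by simp [hab])])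

variable [Fintype α]

theorem card_filter_superset (P : Finset α → Prop) [DecidablePred P] (s : Finset α) :
    #{t | (P t ∧ #t = #s + 1) ∧ s ⊆ t} = #{a | a ∉ s ∧ P (insert a s)} := by
  symm
  refine card_nbij (insert · s) ?_ ?_ ?_
  · simp +contextual [Set.MapsTo]
  · simp only [Set.InjOn, coe_filter_univ, Set.mem_ofPred_eq]
    exact fun a ha b _ hab ↦ (insert_inj ha.1).mp hab
  · intro t ht
    obtain ⟨⟨hPt, hcard⟩, hst⟩ : (P t ∧ #t = #s + 1) ∧ s ⊆ t := by simpa using ht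
    obtain ⟨a, ha, rfl⟩ := exists_eq_insert_iff.mpr ⟨hst, hcard.symm⟩
    exact ⟨a, by simp [ha, hPt], rfl⟩

theorem card_filter_subset (P : Finset α → Prop) [DecidablePred P] (t : Finset α) :
    #{s | (P s ∧ #s + 1 = #t) ∧ s ⊆ t} = #{a ∈ t | P (t.erase a)} := by
  symm
  refine card_nbij t.erase ?_ ((erase_injOn t).mono (filter_subset _ _)) ?_
  · intro a ha
    obtain ⟨hat, hPa⟩ := mem_filter.mp ha
    simp [hPa, card_erase_add_one hat, erase_subset]
  · intro s hs
    obtain ⟨⟨hPs, hcard⟩, hst⟩ : (P s ∧ #s + 1 = #t) ∧ s ⊆ t := by simpa using hs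
    obtain ⟨a, ha, rfl⟩ := exists_eq_insert_iff.mpr ⟨hst, hcard⟩
    exact ⟨a, by simp [ha, hPs], erase_insert ha⟩

end Counting

section Scarf

variable {I V L : Type*} [LinearOrder L] {r : I → V → L} {σ τ : Finset V} {m s : I → V}

/-- Scarf's notion of dominance for a family of rankings `r i`: no element of `V` exceeds, in
every ranking, the minimum of `σ` in that ranking. -/
def IsDominant (r : I → V → L) (σ : Finset V) : Prop :=
  ∀ y, ∃ i, ∀ x ∈ σ, r i y ≤ r i x

/-- A family of slack elements, one for each ranking: `s i` is the bottom of the ranking `r i` and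
lies above all elements outside the family in the other rankings. Slack elements stand for the
faces of the simplex, so that boundary cells need no separate treatment. -/
structure IsSlackFamily (r : I → V → L) (s : I → V) : Prop where
  lt_of_ne {i : I} {v : V} : v ≠ s i → r i (s i) < r i v
  lt_of_notMem_range {i j : I} {v : V} : v ∉ Set.range s → j ≠ i → r i v < r i (s j)

/-- `m i` is a lowest element of `σ` in the ranking `r i`, for each `i`. -/
structure IsMinSelector (r : I → V → L) (σ : Finset V) (m : I → V) : Prop where
  mem (i : I) : m i ∈ σ
  le (i : I) {x : V} : x ∈ σ → r i (m i) ≤ r i x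

/-- The elements lying strictly above `m l` in every ranking `r l` with `l ≠ k`. -/
def exceedingExcept (r : I → V → L) (m : I → V) (k : I) : Set V :=
  {y | ∀ l, l ≠ k → r l (m l) < r l y}

/-- The elements by which Scarf's pivoting step can extend the set with lowest elements `m`, when
the new element is to become the lowest one in the ranking `r k`. -/
def IsPivot (r : I → V → L) (m : I → V) (k : I) (x : V) : Prop :=
  x ∈ exceedingExcept r m k ∧ IsMaxOn (r k) (exceedingExcept r m k) x

theorem IsDominant.mono (hσ : IsDominant r σ) (h : τ ⊆ σ) : IsDominant r τ := fun y ↦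
  (hσ y).imp fun _ hi x hx ↦ hi x (h hx)

theorem exists_isMinSelector (r : I → V → L) (hσ : σ.Nonempty) : ∃ m, IsMinSelector r σ m := by
  choose m hmem hle using fun i ↦ σ.exists_min_image (r i) hσ
  exact ⟨m, hmem, fun i ↦ hle i _⟩

namespace IsMinSelector

theorem isDominant_iff (hm : IsMinSelector r σ m) :
    IsDominant r σ ↔ ∀ y, ∃ i, r i y ≤ r i (m i) :=
  forall_congr' fun _ ↦ exists_congr fun i ↦
    ⟨fun h ↦ h _ (hm.mem i), fun h _ hx ↦ h.trans (hm.le i hx)⟩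

theorem image_univ [Fintype I] [DecidableEq V] (hm : IsMinSelector r σ m)
    (hr : ∀ i, Function.Injective (r i)) (hσ : IsDominant r σ) : univ.image m = σ := by
  refine (image_subset_iff.mpr fun i _ ↦ hm.mem i).antisymm fun x hx ↦ ?_
  obtain ⟨i, hi⟩ := hm.isDominant_iff.mp hσ x
  exact mem_image.mpr ⟨i, mem_univ i, hr i ((hm.le i hx).antisymm hi)⟩

theorem le_of_mem_exceedingExcept (hm : IsMinSelector r σ m) (hσ : IsDominant r σ) {k : I} {x : V}
    (hx : x ∈ exceedingExcept r m k) : r k x ≤ r k (m k) := by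
  obtain ⟨l, hl⟩ := hm.isDominant_iff.mp hσ x
  obtain rfl : l = k := by
    by_contra hlk
    exact (hx l hlk).not_ge hl
  exact hl

theorem notMem_of_mem_exceedingExcept (hm : IsMinSelector r σ m)
    (hr : ∀ i, Function.Injective (r i)) (hσ : IsDominant r σ) {k l : I} (hlk : l ≠ k)
    (hml : m l = m k) {x : V} (hx : x ∈ exceedingExcept r m k) : x ∉ σ := by
  intro hxσ
  have hxm : x = m k := hr k ((hm.le_of_mem_exceedingExcept hσ hx).antisymm (hm.le k hxσ))
  exact (hx l hlk).ne (by rw [hxm, hml])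

theorem isDominant_insert [DecidableEq V] (hm : IsMinSelector r σ m) (hσ : IsDominant r σ)
    {k : I} {x : V} (hx : IsPivot r m k x) : IsDominant r (insert x σ) := by
  intro y
  by_cases hy : y ∈ exceedingExcept r m k
  · refine ⟨k, forall_mem_insert _ _ _ |>.mpr ⟨hx.2 hy, fun z hz ↦ ?_⟩⟩
    exact (hm.le_of_mem_exceedingExcept hσ hy).trans (hm.le k hz)
  · obtain ⟨l, hlk, hly⟩ : ∃ l, l ≠ k ∧ r l y ≤ r l (m l) := by
      simpa [exceedingExcept] using hy
    refine ⟨l, forall_mem_insert _ _ _ |>.mpr ⟨hly.trans (hx.1 l hlk).le, fun z hz ↦ ?_⟩⟩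
    exact hly.trans (hm.le l hz)

theorem exists_isPivot_of_isDominant_insert [Fintype I] [DecidableEq V] (hm : IsMinSelector r σ m)
    (hr : ∀ i, Function.Injective (r i)) (hcard : #σ + 1 = Fintype.card I) {x : V} (hx : x ∉ σ)
    (hσ : IsDominant r (insert x σ)) : ∃ k, (∃ l, l ≠ k ∧ m l = m k) ∧ IsPivot r m k x := by
  obtain ⟨m', hm'⟩ := exists_isMinSelector r (insert_nonempty x σ)
  have himage : univ.image m' = insert x σ := hm'.image_univ hr hσ
  have hsurj {z : V} (hz : z ∈ insert x σ) : ∃ l, m' l = z := by simpa [← himage] using hz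
  have hinj : Function.Injective m' := by
    have hcard' : #(univ.image m') = #(univ : Finset I) := by
      rw [himage, card_insert_of_notMem hx, hcard, card_univ]
    simpa using injOn_of_card_image_eq hcard'
  obtain ⟨k, rfl⟩ := hsurj (mem_insert_self x σ)
  have heq {l : I} (hlk : l ≠ k) : m' l = m l := by
    have hmem : m' l ∈ σ := mem_of_mem_insert_of_ne (hm'.mem l) (hinj.ne hlk)
    exact hr l ((hm'.le l (mem_insert_of_mem (hm.mem l))).antisymm (hm.le l hmem))
  refine ⟨k, ?_, fun l hlk ↦ ?_, fun y hy ↦ ?_⟩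
  · obtain ⟨l, hl⟩ := hsurj (mem_insert_of_mem (hm.mem k))
    have hlk : l ≠ k := by
      rintro rfl
      exact hx (hl ▸ hm.mem l)
    exact ⟨l, hlk, (heq hlk).symm.trans hl⟩
  · rw [← heq hlk]
    exact (hm'.le l (mem_insert_self _ _)).lt_of_ne ((hr l).ne (hinj.ne hlk))
  · obtain ⟨l, hl⟩ := hm'.isDominant_iff.mp hσ y
    obtain rfl : l = k := by
      by_contra hlk
      exact (hy l hlk).not_ge (heq hlk ▸ hl)
    exact hl

theorem exists_isPivot [Finite V] (hm : IsMinSelector r σ m) (hs : IsSlackFamily r s) {t : V}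
    (ht : t ∈ σ) (hts : t ∉ Set.range s) (k : I) : ∃ x, IsPivot r m k x := by
  have hk : s k ∈ exceedingExcept r m k := fun l hlk ↦
    (hm.le l ht).trans_lt (hs.lt_of_notMem_range hts hlk.symm)
  obtain ⟨x, hx, hmax⟩ := Set.exists_max_image _ (r k) (Set.toFinite _) ⟨s k, hk⟩
  exact ⟨x, hx, hmax⟩

end IsMinSelector

theorem IsPivot.unique (hr : ∀ i, Function.Injective (r i)) {k : I} {x y : V}
    (hx : IsPivot r m k x) (hy : IsPivot r m k y) : x = y :=
  hr k ((hy.2 hx.1).antisymm (hx.2 hy.1))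

section Counting

variable [Fintype I] [DecidableEq V]

theorem IsSlackFamily.isDominant_insert_image_erase_iff [DecidableEq I] (hs : IsSlackFamily r s)
    {t : V} (ht : t ∉ Set.range s) {i : I} {x : V} (hx : x ∉ (univ.erase i).image s) :
    IsDominant r (insert x ((univ.erase i).image s)) ↔
      x ∉ Set.range s ∧ ∀ y ∉ Set.range s, r i y ≤ r i x := by
  constructor
  · intro hdom
    have hmax : ∀ y ∉ Set.range s, r i y ≤ r i x := by
      intro y hy
      obtain ⟨j, hj⟩ := hdom y
      obtain rfl : j = i := by
        by_contra hji
        have hmem : s j ∈ (univ.erase i).image s := mem_image_of_mem s (by simp [hji])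
        exact (hs.lt_of_ne fun h ↦ hy ⟨j, h.symm⟩).not_ge (hj _ (mem_insert_of_mem hmem))
      exact hj x (mem_insert_self _ _)
    refine ⟨?_, hmax⟩
    rintro ⟨j, rfl⟩
    obtain rfl : j = i := by
      by_contra hji
      exact hx (mem_image_of_mem s (by simp [hji]))
    exact (hs.lt_of_ne fun h ↦ ht ⟨j, h.symm⟩).not_ge (hmax t ht)
  · rintro ⟨-, hmax⟩ y
    by_cases hy : y ∈ Set.range s
    · obtain ⟨j, rfl⟩ := hy
      refine ⟨j, fun z _ ↦ ?_⟩
      obtain rfl | hz := eq_or_ne z (s j)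
      exacts [le_rfl, (hs.lt_of_ne hz).le]
    · refine ⟨i, forall_mem_insert _ _ _ |>.mpr ⟨hmax y hy, forall_mem_image.mpr fun j hj ↦ ?_⟩⟩
      exact (hs.lt_of_notMem_range hy (ne_of_mem_erase hj)).le

variable [Fintype V] [DecidablePred (IsDominant r)]

theorem card_filter_isDominant_insert_eq_two (hr : ∀ i, Function.Injective (r i))
    (hs : IsSlackFamily r s) (hτ : IsDominant r τ) (hcard : #τ + 1 = Fintype.card I) {t : V}
    (ht : t ∈ τ) (hts : t ∉ Set.range s) : #{x | x ∉ τ ∧ IsDominant r (insert x τ)} = 2 := by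
  classical
  obtain ⟨m, hm⟩ := exists_isMinSelector r ⟨t, ht⟩
  choose p hp using hm.exists_isPivot hs ht hts
  have hcollision : #(univ.image m) + 1 = #(univ : Finset I) := by
    rw [hm.image_univ hr hτ, hcard, card_univ]
  rw [← card_filter_collision_eq_two hcollision]
  symm
  simp only [mem_univ, true_and]
  refine card_nbij p ?_ ?_ ?_
  · intro k hk
    obtain ⟨l, hlk, hml⟩ := (mem_filter.mp hk).2
    have hpτ : p k ∉ τ := hm.notMem_of_mem_exceedingExcept hr hτ hlk hml (hp k).1
    simpa using ⟨hpτ, hm.isDominant_insert hτ (hp k)⟩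
  · intro k _ l _ hkl
    by_contra! hne
    exact ((hp k).1 l hne.symm).not_ge (hkl ▸ hm.le_of_mem_exceedingExcept hτ (hp l).1)
  · intro x hx
    obtain ⟨hxτ, hdom⟩ := (mem_filter.mp hx).2
    obtain ⟨k, hk, hkx⟩ := hm.exists_isPivot_of_isDominant_insert hr hcard hxτ hdom
    exact ⟨k, by simpa using hk, (hp k).unique hr hkx⟩

theorem IsSlackFamily.card_filter_isDominant_insert_eq_one [DecidableEq I]
    (hs : IsSlackFamily r s) (hr : ∀ i, Function.Injective (r i)) {t : V} (ht : t ∉ Set.range s)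
    (i : I) :
    #{x | x ∉ (univ.erase i).image s ∧ IsDominant r (insert x ((univ.erase i).image s))} = 1 := by
  obtain ⟨a, ha, hmax⟩ := Set.exists_max_image (Set.range s)ᶜ (r i) (Set.toFinite _) ⟨t, ht⟩
  have ha' : a ∉ (univ.erase i).image s := fun h ↦
    ha (Set.image_subset_range s _ (by simpa only [coe_image] using mem_coe.mpr h))
  refine card_eq_one.mpr ⟨a, ext fun x ↦ ?_⟩
  simp only [mem_filter, mem_univ, true_and, mem_singleton]
  constructor
  · rintro ⟨hx, hdom⟩
    obtain ⟨hxs, hxmax⟩ := (hs.isDominant_insert_image_erase_iff ht hx).mp hdom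
    exact hr i ((hmax x hxs).antisymm (hxmax a ha))
  · rintro rfl
    exact ⟨ha', (hs.isDominant_insert_image_erase_iff ht ha').mpr ⟨ha, hmax⟩⟩

end Counting

theorem image_image_eq_of_leftInverse [DecidableEq I] [DecidableEq V] {c : V → I}
    (hc : Function.LeftInverse c s) (hτ : ∀ x ∈ τ, x ∈ Set.range s) :
    (τ.image c).image s = τ := by
  rw [image_image]
  refine (image_congr fun x hx ↦ ?_).trans image_id
  obtain ⟨j, rfl⟩ := hτ x hx
  exact congrArg s (hc j)

/-- Scarf's lemma. -/
theorem IsSlackFamily.exists_isDominant_image_eq_univ [Fintype I] [Nonempty I] [DecidableEq I]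
    [Finite V] (hs : IsSlackFamily r s) (hr : ∀ i, Function.Injective (r i)) {t : V}
    (ht : t ∉ Set.range s) {c : V → I} (hc : Function.LeftInverse c s) :
    ∃ σ, IsDominant r σ ∧ σ.image c = univ := by
  classical
  obtain ⟨i⟩ := ‹Nonempty I›
  cases nonempty_fintype V
  by_contra! hcolor
  let doors : Finset (Finset V) :=
    {τ | (IsDominant r τ ∧ τ.image c = univ.erase i) ∧ #τ + 1 = Fintype.card I}
  let rooms : Finset (Finset V) := {σ | IsDominant r σ ∧ #σ = Fintype.card I}
  have habove {τ : Finset V} (hτ : #τ + 1 = Fintype.card I) :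
      #(rooms.bipartiteAbove (· ⊆ ·) τ) = #{x | x ∉ τ ∧ IsDominant r (insert x τ)} := by
    rw [bipartiteAbove, filter_filter, ← hτ, card_filter_superset]
  have hbelow : ∀ σ ∈ rooms, Even #(doors.bipartiteBelow (· ⊆ ·) σ) := by
    intro σ hσ
    obtain ⟨hdom, hcard⟩ := (mem_filter.mp hσ).2
    rw [bipartiteBelow, filter_filter, ← hcard, card_filter_subset,
      filter_congr fun a _ ↦ and_iff_right (hdom.mono (erase_subset a σ))]
    exact even_card_filter_image_erase_eq hcard (hcolor σ hdom) i
  have hone := hs.card_filter_isDominant_insert_eq_one hr ht i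
  have hτ₀ : (univ.erase i).image s ∈ doors := by
    obtain ⟨x, hx⟩ := card_pos.mp (hone ▸ one_pos)
    have hdom := (mem_filter.mp hx).2.2.mono (subset_insert x _)
    have hcard := card_erase_add_one (mem_univ i)
    rw [← card_image_of_injective _ hc.injective] at hcard
    simpa [doors, hdom, image_image, hc.comp_eq_id] using hcard
  have heven : Even #(rooms.bipartiteAbove (· ⊆ ·) ((univ.erase i).image s)) := by
    refine even_card_bipartiteAbove_of_forall_ne hτ₀ (fun τ hτ hne ↦ ?_) hbelow
    obtain ⟨⟨hdom, himage⟩, hcard⟩ := (mem_filter.mp hτ).2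
    obtain ⟨x, hx, hxs⟩ : ∃ x ∈ τ, x ∉ Set.range s := by
      by_contra! h
      exact hne (by rw [← himage, image_image_eq_of_leftInverse hc h])
    rw [habove hcard, card_filter_isDominant_insert_eq_two hr hs hdom hcard hx hxs]
    exact even_two
  rw [habove (mem_filter.mp hτ₀).2.2, hone] at heven
  exact Nat.not_even_one heven

end Scarf

section NoBullying

variable {I T L : Type*} (u : I → T → L) [DecidableEq I]

/-- The evaluation of the elements of `T` by `u i`, extended to slack elements `Sum.inr j`: they
come last for `j = i` and first for `j ≠ i`. -/
def slackLevel (i : I) : T ⊕ I → WithBot (WithTop L) :=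
  Sum.elim (fun x ↦ ((u i x : WithTop L) : WithBot (WithTop L)))
    fun j ↦ if j = i then ⊥ else ((⊤ : WithTop L) : WithBot (WithTop L))

/-- The rankings of `T ⊕ I` by `slackLevel u`, with ties broken by an arbitrary enumeration. -/
noncomputable def slackRanking [Finite T] [Finite I] (i : I) (v : T ⊕ I) :
    WithBot (WithTop L) ×ₗ Fin (Nat.card (T ⊕ I)) :=
  toLex (slackLevel u i v, Finite.equivFin (T ⊕ I) v)

variable [Finite T] [Finite I] {u}

theorem slackRanking_injective (i : I) : Function.Injective (slackRanking u i) := fun _ _ h ↦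
  (Finite.equivFin (T ⊕ I)).injective (congrArg Prod.snd (toLex.injective h))

variable [LinearOrder L]

theorem slackRanking_lt_of_slackLevel_lt {i : I} {v w : T ⊕ I}
    (h : slackLevel u i v < slackLevel u i w) : slackRanking u i v < slackRanking u i w :=
  Prod.Lex.toLex_lt_toLex.mpr (.inl h)

theorem le_of_slackRanking_le {i : I} {x y : T}
    (h : slackRanking u i (.inl x) ≤ slackRanking u i (.inl y)) : u i x ≤ u i y := by
  contrapose! h
  exact slackRanking_lt_of_slackLevel_lt (by simpa [slackLevel] using h)

theorem isSlackFamily_slackRanking : IsSlackFamily (slackRanking u) Sum.inr where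
  lt_of_ne {i v} hv := by
    apply slackRanking_lt_of_slackLevel_lt
    rcases v with x | j
    · simp [slackLevel]
    · simp [slackLevel, show j ≠ i by simpa using hv]
  lt_of_notMem_range {i j v} hv hji := by
    apply slackRanking_lt_of_slackLevel_lt
    rcases v with x | k
    · rw [slackLevel, Sum.elim_inl, Sum.elim_inr, if_neg hji]
      exact WithBot.coe_lt_coe.mpr (WithTop.coe_lt_top _)
    · simp at hv

variable (u) in
/-- The "no bullying" lemma of Petri and Voorneveld. -/
theorem exists_forall_exists_mem_image_forall_le (c : T → I) :
    ∃ S : Finset T, ∀ y, ∃ i ∈ S.image c, ∀ x ∈ S, u i y ≤ u i x := by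
  obtain hT | ⟨⟨t⟩⟩ := isEmpty_or_nonempty T
  · exact ⟨∅, isEmptyElim⟩
  cases nonempty_fintype I
  have : Nonempty I := ⟨c t⟩
  obtain ⟨σ, hdom, hcolor⟩ := isSlackFamily_slackRanking.exists_isDominant_image_eq_univ
    (slackRanking_injective (u := u)) (t := .inl t) (by simp) (c := Sum.elim c id) fun _ ↦ rfl
  refine ⟨σ.toLeft, fun y ↦ ?_⟩
  obtain ⟨i, hi⟩ := hdom (.inl y)
  refine ⟨i, ?_, fun x hx ↦ le_of_slackRanking_le (hi _ (mem_toLeft.mp hx))⟩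
  obtain ⟨x | j, hσ, hci⟩ := mem_image.mp (hcolor ▸ mem_univ i)
  · exact mem_image.mpr ⟨x, mem_toLeft.mpr hσ, hci⟩
  · obtain rfl : j = i := hci
    exact absurd (hi _ hσ) (isSlackFamily_slackRanking.lt_of_ne (by simp)).not_ge

end NoBullying

section KKM

variable {I : Type*} [Fintype I]

theorem sub_le_one_sub_sum_of_le {x : stdSimplex ℝ I} {b : I → ℝ} (hb : ∀ i, b i ≤ x i) (i : I) :
    x i - b i ≤ 1 - ∑ j, b j := by
  rw [← stdSimplex.sum_eq_one x, ← sum_sub_distrib]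
  exact single_le_sum (f := fun j ↦ x j - b j) (fun j _ ↦ sub_nonneg.mpr (hb j)) (mem_univ i)

theorem dist_le_one_sub_sum_of_le {x y : stdSimplex ℝ I} {b : I → ℝ} (hx : ∀ i, b i ≤ x i)
    (hy : ∀ i, b i ≤ y i) : dist x y ≤ 1 - ∑ i, b i := by
  have hb : 0 ≤ 1 - ∑ i, b i :=
    sub_nonneg.mpr ((sum_le_sum fun i _ ↦ hx i).trans_eq (stdSimplex.sum_eq_one x))
  refine (dist_pi_le_iff hb).mpr fun i ↦ abs_sub_le_iff.mpr ⟨?_, ?_⟩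
  · exact (sub_le_sub_left (hy i) _).trans (sub_le_one_sub_sum_of_le hx i)
  · exact (sub_le_sub_left (hx i) _).trans (sub_le_one_sub_sum_of_le hy i)

theorem one_sub_sum_le_card_mul {T : Set (stdSimplex ℝ I)} {ε : ℝ}
    (hT : ∀ y, ∃ x ∈ T, dist y x < ε) {b : I → ℝ} (hb : ∀ i, 0 ≤ b i) {C : Finset I}
    (hC : C.Nonempty) (hTC : ∀ x ∈ T, ∃ i ∈ C, x i ≤ b i) : 1 - ∑ i, b i ≤ #C * ε := by
  classical
  obtain ⟨i, hi⟩ := hC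
  have hCpos : (0 : ℝ) < #C := mod_cast card_pos.mpr ⟨i, hi⟩
  obtain ⟨x, -, hx⟩ := hT (stdSimplex.vertex i)
  -- Spreading the missing mass over the coordinates in `C` would otherwise give a point of the
  -- simplex exceeding `b` by more than `ε` in all of them.
  by_contra! hlt
  set η := (1 - ∑ i, b i) / #C with hη
  have hεη : ε < η := (lt_div_iff₀' hCpos).mpr hlt
  let y : stdSimplex ℝ I := ⟨fun i ↦ b i + if i ∈ C then η else 0, fun i ↦ ?_, ?_⟩
  · obtain ⟨x, hxT, hyx⟩ := hT y
    obtain ⟨i, hiC, hxb⟩ := hTC x hxT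
    have hyi : y i = b i + η := congrArg (b i + ·) (if_pos hiC)
    have hdist := (le_abs_self _).trans (dist_le_pi_dist y.1 x.1 i)
    change y i - x i ≤ dist y x at hdist
    linarith
  · have : 0 ≤ η := dist_nonneg.trans (hx.trans hεη).le
    have := hb i
    positivity
  · rw [sum_add_distrib, sum_ite_mem, univ_inter, sum_const, nsmul_eq_mul, hη,
      mul_div_cancel₀ _ hCpos.ne', add_sub_cancel]

theorem exists_lower_bound_of_coloring [Nonempty I] (c : stdSimplex ℝ I → I) {ε : ℝ}
    (hε : 0 < ε) : ∃ (S : Set (stdSimplex ℝ I)) (b : I → ℝ), S.Nonempty ∧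
      (∀ x ∈ S, ∀ i, b i ≤ x i) ∧ 1 - ∑ i, b i ≤ ε ∧ ∀ i, b i = 0 ∨ ∃ x ∈ S, c x = i := by
  classical
  have hI : (0 : ℝ) < Fintype.card I := mod_cast Fintype.card_pos
  obtain ⟨T, -, hTfin, hT⟩ :=
    (isCompact_univ (X := stdSimplex ℝ I)).finite_cover_balls (div_pos hε hI)
  replace hT (y : stdSimplex ℝ I) : ∃ x ∈ T, dist y x < ε / Fintype.card I := by
    simpa using hT (Set.mem_univ y)
  have := hTfin.to_subtype
  obtain ⟨S, hS⟩ := exists_forall_exists_mem_image_forall_le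
    (fun i (x : T) ↦ x.1 i) (fun x ↦ c x.1)
  set C : Finset I := S.image fun x ↦ c x.1
  obtain ⟨t, ht, -⟩ := hT (Classical.arbitrary _)
  obtain ⟨i₀, hi₀, -⟩ := hS ⟨t, ht⟩
  have hSne : S.Nonempty := image_nonempty.mp ⟨i₀, hi₀⟩
  choose m hm hmin using fun i ↦ S.exists_min_image (fun x ↦ x.1 i) hSne
  let b (i : I) : ℝ := if i ∈ C then (m i).1 i else 0
  have hb0 (i : I) : 0 ≤ b i := ite_nonneg (stdSimplex.zero_le _ i) le_rfl
  refine ⟨Subtype.val '' (S : Set T), b, hSne.to_set.image _, ?_, ?_, fun i ↦ ?_⟩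
  · rintro _ ⟨x, hx, rfl⟩ i
    dsimp only [b]
    split_ifs
    exacts [hmin i x hx, stdSimplex.zero_le _ i]
  · have hTC : ∀ x ∈ T, ∃ i ∈ C, x i ≤ b i := fun x hx ↦
      (hS ⟨x, hx⟩).imp fun i ⟨hi, hxi⟩ ↦
        ⟨hi, (hxi _ (hm i)).trans_eq (if_pos (c := i ∈ C) hi).symm⟩
    calc 1 - ∑ i, b i ≤ #C * (ε / Fintype.card I) :=
          one_sub_sum_le_card_mul hT hb0 ⟨i₀, hi₀⟩ hTC
      _ ≤ Fintype.card I * (ε / Fintype.card I) := by gcongr; exact card_le_univ C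
      _ = ε := mul_div_cancel₀ ε hI.ne'
  · by_cases hi : i ∈ C
    · obtain ⟨x, hx, hci⟩ := mem_image.mp hi
      exact .inr ⟨x.1, Set.mem_image_of_mem _ hx, hci⟩
    · exact .inl (if_neg hi)

theorem exists_forall_le_or_exists_dist_le [Nonempty I] (c : stdSimplex ℝ I → I) {ε : ℝ}
    (hε : 0 < ε) : ∃ z : stdSimplex ℝ I, ∀ i, z i ≤ ε ∨ ∃ x, c x = i ∧ dist x z ≤ ε := by
  obtain ⟨S, b, ⟨z, hz⟩, hbS, hbε, hc⟩ := exists_lower_bound_of_coloring c hε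
  refine ⟨z, fun i ↦ (hc i).imp (fun hbi ↦ ?_) fun ⟨x, hx, hci⟩ ↦ ⟨x, hci, ?_⟩⟩
  · simpa only [hbi, sub_zero] using (sub_le_one_sub_sum_of_le (hbS z hz) i).trans hbε
  · exact (dist_le_one_sub_sum_of_le (hbS x hx) (hbS z hz)).trans hbε

/-- A version of the Knaster–Kuratowski–Mazurkiewicz lemma. -/
theorem exists_forall_mem_of_iUnion_eq_univ [Nonempty I] {F : I → Set (stdSimplex ℝ I)}
    (hF : ∀ i, IsClosed (F i)) (hcover : ⋃ i, F i = Set.univ) :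
    ∃ w : stdSimplex ℝ I, ∀ i, w i ≠ 0 → w ∈ F i := by
  choose c hc using Set.iUnion_eq_univ_iff.mp hcover
  choose z hz using fun n : ℕ ↦
    exists_forall_le_or_exists_dist_le c (Nat.one_div_pos_of_nat (n := n) (α := ℝ))
  obtain ⟨w, φ, hφ, hw⟩ := CompactSpace.tendsto_subseq z
  refine ⟨w, fun i hi ↦ ?_⟩
  by_contra hwF
  obtain ⟨δ, hδ, hball⟩ := Metric.isOpen_iff.mp (hF i).isOpen_compl w hwF
  have hwi : 0 < w i := (stdSimplex.zero_le w i).lt_of_ne' hi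
  have hη : 0 < min δ (w i) / 2 := half_pos (lt_min hδ hwi)
  have hε := tendsto_one_div_add_atTop_nhds_zero_nat (𝕜 := ℝ).comp hφ.tendsto_atTop
  obtain ⟨n, hn, hεn⟩ := ((Metric.tendsto_nhds.mp hw _ hη).and (hε.eventually_lt_const hη)).exists
  dsimp only [Function.comp_apply] at hn hεn
  have hδ := min_le_left δ (w i)
  have hw := min_le_right δ (w i)
  rcases hz (φ n) i with hzi | ⟨x, rfl, hx⟩
  · have hdist := (neg_abs_le _).trans' (neg_le_neg (dist_le_pi_dist (z (φ n)).1 w.1 i))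
    change -dist (z (φ n)) w ≤ z (φ n) i - w i at hdist
    linarith
  · refine hball ?_ (hc x)
    have := dist_triangle x (z (φ n)) w
    rw [Metric.mem_ball]
    linarith

end KKM

section FixedPointProperty

/-- A topological space has the fixed point property if each of its continuous self-maps has a
fixed point. -/
def HasFixedPointProperty (X : Type*) [TopologicalSpace X] : Prop :=
  ∀ f : C(X, X), ∃ x, Function.IsFixedPt f x

theorem HasFixedPointProperty.of_leftInverse {X Y : Type*} [TopologicalSpace X]
    [TopologicalSpace Y] (hX : HasFixedPointProperty X) {g : Y → X} {p : X → Y}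
    (hg : Continuous g) (hp : Continuous p) (hpg : Function.LeftInverse p g) :
    HasFixedPointProperty Y := by
  intro f
  obtain ⟨x, hx⟩ := hX ⟨fun x ↦ g (f (p x)), by fun_prop⟩
  exact ⟨p x, (hpg _).symm.trans (congrArg p hx)⟩

theorem continuous_stdSimplex_apply {I : Type*} [Fintype I] (i : I) :
    Continuous fun x : stdSimplex ℝ I ↦ x i :=
  (continuous_apply i).comp continuous_subtype_val

/-- Brouwer's fixed point theorem for the simplex. -/
theorem hasFixedPointProperty_stdSimplex (I : Type*) [Fintype I] [Nonempty I] :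
    HasFixedPointProperty (stdSimplex ℝ I) := by
  intro f
  have hsum (x : stdSimplex ℝ I) : ∑ i, x i = ∑ i, f x i := by simp
  have hcover : ⋃ i, {x | x i ≤ f x i} = Set.univ := by
    refine Set.iUnion_eq_univ_iff.mpr fun x ↦ ?_
    obtain ⟨i, -, hi⟩ := exists_le_of_sum_le univ_nonempty (hsum x).le
    exact ⟨i, hi⟩
  have hclosed (i : I) : IsClosed {x | x i ≤ f x i} :=
    isClosed_le (continuous_stdSimplex_apply i) ((continuous_stdSimplex_apply i).comp f.continuous)
  obtain ⟨x, hx⟩ := exists_forall_mem_of_iUnion_eq_univ hclosed hcover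
  have hle : ∀ i ∈ univ, x i ≤ f x i := by
    intro i _
    obtain h | h := eq_or_ne (x i) 0
    exacts [h ▸ stdSimplex.zero_le _ i, hx i h]
  have heq := (sum_eq_sum_iff_of_le hle).mp (hsum x)
  exact ⟨x, stdSimplex.ext (funext fun i ↦ (heq i (mem_univ i)).symm)⟩

theorem exists_retraction_stdSimplex (I : Type*) [Fintype I] [Nonempty I] :
    ∃ p : C(I → ℝ, stdSimplex ℝ I), ∀ x : stdSimplex ℝ I, p x = x := by
  let q (v : I → ℝ) (i : I) : ℝ := v i ⊔ 0 + (1 - ∑ j, v j ⊔ 0) ⊔ 0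
  have hq0 (v : I → ℝ) (i : I) : 0 ≤ q v i := add_nonneg le_sup_right le_sup_right
  have hq (v : I → ℝ) : 0 < ∑ i, q v i := by
    have hI : (1 : ℝ) ≤ Fintype.card I := mod_cast Fintype.card_pos
    have hle : (1 - ∑ j, v j ⊔ 0) ⊔ 0 ≤ Fintype.card I * ((1 - ∑ j, v j ⊔ 0) ⊔ 0) :=
      le_mul_of_one_le_left le_sup_right hI
    have hsum : ∑ i, q v i = ∑ j, v j ⊔ 0 + Fintype.card I * ((1 - ∑ j, v j ⊔ 0) ⊔ 0) := by
      simp [q, sum_add_distrib]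
    linarith [le_sup_left (a := 1 - ∑ j, v j ⊔ 0) (b := 0)]
  have hqx (x : stdSimplex ℝ I) : q x = x := by
    funext i
    simp [q]
  refine ⟨⟨fun v ↦ ⟨fun i ↦ q v i / ∑ j, q v j, fun i ↦ div_nonneg (hq0 v i) (hq v).le, ?_⟩, ?_⟩,
    fun x ↦ stdSimplex.ext (funext fun i ↦ ?_)⟩
  · rw [← sum_div, div_self (hq v).ne']
  · exact .subtype_mk (continuous_pi fun i ↦ .div (by fun_prop) (by fun_prop) fun v ↦ (hq v).ne') _
  · change q x i / ∑ j, q x j = x i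
    rw [hqx, stdSimplex.sum_eq_one, div_one]

theorem hasFixedPointProperty_pi_stdSimplex {ι : Type*} [Finite ι] (α : ι → Type*)
    [∀ i, Fintype (α i)] [∀ i, Nonempty (α i)] :
    HasFixedPointProperty (∀ i, stdSimplex ℝ (α i)) := by
  cases nonempty_fintype ι
  obtain hι | ⟨⟨i₀⟩⟩ := isEmpty_or_nonempty ι
  · exact fun f ↦ ⟨isEmptyElim, Subsingleton.elim _ _⟩
  have : Nonempty (Σ i, α i) := ⟨i₀, Classical.arbitrary _⟩
  have hcard : (Fintype.card ι : ℝ) ≠ 0 := mod_cast (Fintype.card_pos_iff.mpr ⟨i₀⟩).ne'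
  choose p hp using fun i ↦ exists_retraction_stdSimplex (α i)
  let g (x : ∀ i, stdSimplex ℝ (α i)) : stdSimplex ℝ (Σ i, α i) :=
    ⟨fun a ↦ x a.1 a.2 / Fintype.card ι,
      fun a ↦ div_nonneg (stdSimplex.zero_le _ _) (Nat.cast_nonneg _),
      by
        rw [← sum_div, Fintype.sum_sigma, sum_congr rfl fun i _ ↦ stdSimplex.sum_eq_one (x i)]
        simp [hcard]⟩
  refine (hasFixedPointProperty_stdSimplex (Σ i, α i)).of_leftInverse (g := g)
    (p := fun y i ↦ p i fun a ↦ Fintype.card ι * y ⟨i, a⟩) ?_ ?_ fun x ↦ funext fun i ↦ ?_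
  · refine .subtype_mk (continuous_pi fun a ↦ ?_) _
    exact ((continuous_stdSimplex_apply a.2).comp (continuous_apply a.1)).div_const _
  · refine continuous_pi fun i ↦ (p i).continuous.comp (continuous_pi fun a ↦ ?_)
    exact (continuous_stdSimplex_apply _).const_mul _
  · convert hp i (x i) with a
    exact mul_div_cancel₀ _ hcard

end FixedPointProperty

section IncentiveEquilibrium

variable {n : ℕ} {s : Fin n → ℕ} {φ : (∀ i, Fin (s i + 1) → ℝ) → ∀ i, Fin (s i + 1) → ℝ}
  {x : ∀ i, Fin (s i + 1) → ℝ}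

theorem mem_Δset_iff : x ∈ Δset s ↔ ∀ i, x i ∈ stdSimplex ℝ (Fin (s i + 1)) :=
  forall_and.symm

theorem exists_isFixedPt_of_mapsTo_Δset {f : (∀ i, Fin (s i + 1) → ℝ) → ∀ i, Fin (s i + 1) → ℝ}
    (hcont : ContinuousOn f (Δset s)) (hmaps : Set.MapsTo f (Δset s) (Δset s)) :
    ∃ x ∈ Δset s, Function.IsFixedPt f x := by
  let ofProd (x : ∀ i, stdSimplex ℝ (Fin (s i + 1))) : Δset s :=
    ⟨fun i ↦ (x i).1, mem_Δset_iff.mpr fun i ↦ (x i).2⟩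
  let toProd (x : Δset s) (i : Fin n) : stdSimplex ℝ (Fin (s i + 1)) :=
    ⟨x.1 i, mem_Δset_iff.mp x.2 i⟩
  have hΔ : HasFixedPointProperty (Δset s) :=
    (hasFixedPointProperty_pi_stdSimplex fun i ↦ Fin (s i + 1)).of_leftInverse (g := toProd)
      (p := ofProd)
      (continuous_pi fun i ↦ .subtype_mk ((continuous_apply i).comp continuous_subtype_val) _)
      (.subtype_mk (by fun_prop) _) fun _ ↦ rfl
  obtain ⟨x, hx⟩ := hΔ ⟨hmaps.restrict f _ _, hcont.mapsToRestrict hmaps⟩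
  exact ⟨x, x.2, congrArg Subtype.val hx⟩

theorem isFixedPt_Tmap_iff (hφ : ∀ i, 1 + ∑ β, φ x i β ≠ 0) :
    Function.IsFixedPt (Tmap φ) x ↔ IncEq φ x := by
  simp only [Function.IsFixedPt, funext_iff, Tmap, IncEq, div_eq_iff (hφ _), mul_add, mul_one,
    add_right_inj]

theorem Tmap_mem_Δset (hφ : ∀ i α, 0 ≤ φ x i α) (hx : x ∈ Δset s) : Tmap φ x ∈ Δset s := by
  have hpos (i : Fin n) : 0 < 1 + ∑ β, φ x i β :=
    add_pos_of_pos_of_nonneg one_pos (sum_nonneg fun β _ ↦ hφ i β)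
  refine ⟨fun i α ↦ div_nonneg (add_nonneg (hx.1 i α) (hφ i α)) (hpos i).le, fun i ↦ ?_⟩
  simp only [Tmap]
  rw [← sum_div, sum_add_distrib, hx.2 i, div_self (hpos i).ne']

theorem exists_incEq (hcont : ContinuousOn φ (Δset s))
    (hφ : ∀ x ∈ Δset s, ∀ i α, 0 ≤ φ x i α) : ∃ x ∈ Δset s, IncEq φ x := by
  have hne {x} (hx : x ∈ Δset s) (i : Fin n) : 1 + ∑ β, φ x i β ≠ 0 :=
    (add_pos_of_pos_of_nonneg one_pos (sum_nonneg fun β _ ↦ hφ x hx i β)).ne'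
  have hTcont : ContinuousOn (Tmap φ) (Δset s) := by
    unfold Tmap
    fun_prop (disch := exact fun x hx ↦ hne hx _)
  obtain ⟨x, hx, hfix⟩ :=
    exists_isFixedPt_of_mapsTo_Δset hTcont fun x hx ↦ Tmap_mem_Δset (hφ x hx) hx
  exact ⟨x, hx, (isFixedPt_Tmap_iff (hne hx)).mp hfix⟩

end IncentiveEquilibrium

section Nash

variable {n : ℕ} {s : Fin n → ℕ}

/-- `mulExt u` as a multilinear map. -/
noncomputable def mulExtMultilinear (u : (∀ j, Fin (s j + 1)) → ℝ) :
    MultilinearMap ℝ (fun j ↦ Fin (s j + 1) → ℝ) ℝ :=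
  ∑ p, u p • (MultilinearMap.mkPiAlgebra ℝ (Fin n) ℝ).compLinearMap fun j ↦ LinearMap.proj (p j)

theorem mulExtMultilinear_apply (u : (∀ j, Fin (s j + 1)) → ℝ) (x : ∀ i, Fin (s i + 1) → ℝ) :
    mulExtMultilinear u x = mulExt u x := by
  simp [mulExtMultilinear, mulExt, mul_comm]

theorem mulExt_eq_sum_update_pureVec (u : (∀ j, Fin (s j + 1)) → ℝ)
    (x : ∀ i, Fin (s i + 1) → ℝ) (i : Fin n) :
    mulExt u x = ∑ α, x i α * mulExt u (Function.update x i (pureVec α)) := by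
  have hpure (α : Fin (s i + 1)) : pureVec α = fun β ↦ if α = β then 1 else 0 :=
    funext fun β ↦ by simp only [pureVec, eq_comm]
  have h := ((mulExtMultilinear u).toLinearMap x i).pi_apply_eq_sum_univ (x i)
  simpa only [MultilinearMap.toLinearMap_apply, Function.update_eq_self, mulExtMultilinear_apply,
    smul_eq_mul, hpure] using h

theorem continuous_mulExt (u : (∀ j, Fin (s j + 1)) → ℝ) : Continuous (mulExt u) := by
  unfold mulExt
  fun_prop

/-- The payoff that player `i` gains by switching to the pure strategy `α`. -/
noncomputable def deviationGain (u : Fin n → (∀ j, Fin (s j + 1)) → ℝ)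
    (x : ∀ i, Fin (s i + 1) → ℝ) (i : Fin n) (α : Fin (s i + 1)) : ℝ :=
  mulExt (u i) (Function.update x i (pureVec α)) - mulExt (u i) x

/-- The Nash incentive: the positive part of the gain from a pure deviation. -/
noncomputable def nashIncentive (u : Fin n → (∀ j, Fin (s j + 1)) → ℝ)
    (x : ∀ i, Fin (s i + 1) → ℝ) (i : Fin n) (α : Fin (s i + 1)) : ℝ :=
  (deviationGain u x i α)⁺

variable {u : Fin n → (∀ j, Fin (s j + 1)) → ℝ} {x : ∀ i, Fin (s i + 1) → ℝ}

theorem continuous_nashIncentive : Continuous (nashIncentive u) := by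
  have hcont (i : Fin n) := continuous_mulExt (u i)
  unfold nashIncentive deviationGain
  simp only [posPart_def]
  fun_prop

theorem sum_mul_deviationGain (hx : x ∈ Δset s) (i : Fin n) :
    ∑ α, x i α * deviationGain u x i α = 0 := by
  simp only [deviationGain, mul_sub, sum_sub_distrib]
  rw [← mulExt_eq_sum_update_pureVec, ← sum_mul, hx.2 i, one_mul, sub_self]

theorem nashEq_of_deviationGain_nonpos (hx : x ∈ Δset s)
    (h : ∀ i α, deviationGain u x i α ≤ 0) : NashEq u x := by
  intro i
  refine le_antisymm ?_ (sup'_le _ _ fun α _ ↦ sub_nonpos.mp (h i α))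
  let deviation (α : Fin (s i + 1)) : ℝ := mulExt (u i) (Function.update x i (pureVec α))
  calc mulExt (u i) x = ∑ α, x i α * deviation α := mulExt_eq_sum_update_pureVec (u i) x i
    _ ≤ ∑ α, x i α * univ.sup' univ_nonempty deviation :=
      sum_le_sum fun α hα ↦ mul_le_mul_of_nonneg_left (le_sup' deviation hα) (hx.1 i α)
    _ = univ.sup' univ_nonempty deviation := by rw [← sum_mul, hx.2 i, one_mul]

theorem deviationGain_nonpos_of_incEq (hx : x ∈ Δset s) (hinc : IncEq (nashIncentive u) x)
    (i : Fin n) (α : Fin (s i + 1)) : deviationGain u x i α ≤ 0 := by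
  have hzero : ∑ β, nashIncentive u x i β * deviationGain u x i β = 0 := by
    calc ∑ β, nashIncentive u x i β * deviationGain u x i β
        = (∑ γ, nashIncentive u x i γ) * ∑ β, x i β * deviationGain u x i β := by
          rw [mul_sum]
          exact sum_congr rfl fun β _ ↦ by rw [hinc i β]; ring
      _ = 0 := by rw [sum_mul_deviationGain hx, mul_zero]
  have hnonneg (β : Fin (s i + 1)) : 0 ≤ nashIncentive u x i β * deviationGain u x i β := by
    obtain h | h := le_total (deviationGain u x i β) 0
    · simp [nashIncentive, posPart_of_nonpos h]
    · exact mul_nonneg (posPart_nonneg _) h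
  have hα := (sum_eq_zero_iff_of_nonneg fun β _ ↦ hnonneg β).mp hzero α (mem_univ α)
  by_contra! hpos
  rw [nashIncentive, posPart_of_nonneg hpos.le] at hα
  exact (mul_pos hpos hpos).ne' hα

end Nash

/-- Nash's theorem: every finite game has a Nash equilibrium. -/
theorem exists_nash_equilibrium {n : ℕ} (hn : 0 < n) (s : Fin n → ℕ)
    (u : Fin n → (∀ j, Fin (s j + 1)) → ℝ) :
    ∃ x ∈ Δset s, NashEq u x := by
  obtain ⟨x, hx, hinc⟩ := exists_incEq (s := s) (φ := nashIncentive u)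
    continuous_nashIncentive.continuousOn fun _ _ _ _ ↦ posPart_nonneg _
  exact ⟨x, hx, nashEq_of_deviationGain_nonpos hx (deviationGain_nonpos_of_incEq hx hinc)⟩
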